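/- If the sequence p̄ = (p(1), p(2), …), with 0 ≤ p(i) ≤ 1, contains only finitely many non-zero terms, then for every first-order sentence ψ of the language L_≤^c the limit of the probability that ψ holds in C(n,p̄) exists as n → ∞ and equals 0 or 1. -/

import Mathlib

open FirstOrder Filter

namespace RandomGraph

/-- The set of potential edges of a graph on `Fin n` (pairs `(v,w)` with `v < w`).
Vertex `v : Fin n` represents the number `v + 1` of the interval `[n] = {1, …, n}`. -/
abbrev EdgeIdx (n : ℕ) := {e : Fin n × Fin n // e.1 < e.2}

/-- An outcome of the random graph on `[n]`: a choice of which potential edges are present. -/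
abbrev Sample (n : ℕ) := EdgeIdx n → Bool

/-- Adjacency of two vertices (described by their values in `Fin n`) in the outcome `ω`. -/
def adjVal {n : ℕ} (ω : Sample n) (a b : ℕ) : Prop :=
  ∃ e : EdgeIdx n, ω e = true ∧
    ((e.1.1.val = a ∧ e.1.2.val = b) ∨ (e.1.1.val = b ∧ e.1.2.val = a))

/-- Adjacency of two vertices in the outcome `ω`. -/
def sampleAdj {n : ℕ} (ω : Sample n) (v w : Fin n) : Prop := adjVal ω v.val w.val

/-- The probability of the outcome `ω` in the model `G(n, p̄)`: each pair of distinct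
vertices at distance `d` is an edge with probability `p d`, independently.  (The value `p 0` is
never used, since distinct vertices are at distance at least 1.) -/
noncomputable def sampleWeight (p : ℕ → ℝ) {n : ℕ} (ω : Sample n) : ℝ :=
  ∏ e : EdgeIdx n,
    (if ω e then p (e.1.2.val - e.1.1.val) else 1 - p (e.1.2.val - e.1.1.val))

/-- The probability of the outcome `ω` in the circular model `C(n, p̄)`: vertices `v, w` are
adjacent with probability `p (min |v-w| (n - |v-w|))`, independently. -/
noncomputable def cWeight (p : ℕ → ℝ) {n : ℕ} (ω : Sample n) : ℝ :=
  ∏ e : EdgeIdx n,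
    (if ω e then p (min (e.1.2.val - e.1.1.val) (n - (e.1.2.val - e.1.1.val)))
      else 1 - p (min (e.1.2.val - e.1.1.val) (n - (e.1.2.val - e.1.1.val))))

open scoped Classical in
/-- The probability of the event `P` in the random graph `G(n, p̄)`. -/
noncomputable def Pr (p : ℕ → ℝ) (n : ℕ) (P : Sample n → Prop) : ℝ :=
  ∑ ω : Sample n, if P ω then sampleWeight p ω else 0

open scoped Classical in
/-- The probability of the event `P` in the circular random graph `C(n, p̄)`. -/
noncomputable def cPr (p : ℕ → ℝ) (n : ℕ) (P : Sample n → Prop) : ℝ :=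
  ∑ ω : Sample n, if P ω then cWeight p ω else 0

/-! ### The language `L` of graphs (also used as the language `L^c`) -/

/-- An outcome `ω` of the random graph, viewed as a structure of `FirstOrder.Language.graph`,
the language with a single binary adjacency predicate. -/
def graphStructure {n : ℕ} (ω : Sample n) : Language.graph.Structure (Fin n) where
  RelMap | .adj => fun x => sampleAdj ω (x 0) (x 1)

/-- Satisfaction of a sentence of the language `L` in the outcome `ω`. -/
def SatL {n : ℕ} (ω : Sample n) (ψ : Language.graph.Sentence) : Prop :=
  @Language.Sentence.Realize _ _ (graphStructure ω) ψ

/-- `Prob(n, p̄; ψ)` for a sentence `ψ` of the language `L`. -/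
noncomputable def ProbL (p : ℕ → ℝ) (n : ℕ) (ψ : Language.graph.Sentence) : ℝ :=
  Pr p n fun ω => SatL ω ψ

/-- The probability that `C(n, p̄)` satisfies a sentence `ψ` of the language `L^c = L`. -/
noncomputable def cProbL (p : ℕ → ℝ) (n : ℕ) (ψ : Language.graph.Sentence) : ℝ :=
  cPr p n fun ω => SatL ω ψ

/-! ### The language `L₊` -/

/-- The constants of the language `L₊`: the first element `1` and the last element `n`. -/
inductive plusFunc : ℕ → Type
  | one : plusFunc 0
  | last : plusFunc 0

/-- The relations of `L₊`: adjacency and successor. -/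
inductive plusRel : ℕ → Type
  | adj : plusRel 2
  | succ : plusRel 2

/-- The language `L₊` with adjacency, successor (`x = y + 1`), and constants `1` and `n`. -/
def Lplus : Language := ⟨plusFunc, plusRel⟩

/-- An outcome `ω` of the random graph on `[m+1]`, as an `L₊`-structure. -/
def plusStructure {m : ℕ} (ω : Sample (m + 1)) : Lplus.Structure (Fin (m + 1)) where
  funMap | .one => fun _ => 0 | .last => fun _ => Fin.last m
  RelMap
    | .adj => fun x => sampleAdj ω (x 0) (x 1)
    | .succ => fun x => (x 0).val = (x 1).val + 1

/-- `Prob(n, p̄; ψ)` for a sentence `ψ` of `L₊` (set to `0` in the irrelevant case `n = 0`,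
where the constants cannot be interpreted). -/
noncomputable def ProbPlus (p : ℕ → ℝ) : ℕ → Lplus.Sentence → ℝ
  | 0, _ => 0
  | (m + 1), ψ => Pr p (m + 1) fun ω => @Language.Sentence.Realize _ _ (plusStructure ω) ψ

/-! ### The language `L≤` -/

/-- The relations of `L≤`: adjacency and linear order. -/
inductive leRel : ℕ → Type
  | adj : leRel 2
  | le : leRel 2

/-- The language `L≤` with adjacency and a linear order. -/
def Lle : Language := ⟨fun _ => Empty, leRel⟩

/-- An outcome `ω` of the random graph on `[n]`, as an `L≤`-structure. -/
def leStructure {n : ℕ} (ω : Sample n) : Lle.Structure (Fin n) where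
  funMap := fun f _ => Empty.elim f
  RelMap
    | .adj => fun x => sampleAdj ω (x 0) (x 1)
    | .le => fun x => x 0 ≤ x 1

/-- Satisfaction of a sentence of `L≤` in the outcome `ω`. -/
def SatLe {n : ℕ} (ω : Sample n) (ψ : Lle.Sentence) : Prop :=
  @Language.Sentence.Realize _ _ (leStructure ω) ψ

/-- `Prob(n, p̄; ψ)` for a sentence `ψ` of `L≤`. -/
noncomputable def ProbLe (p : ℕ → ℝ) (n : ℕ) (ψ : Lle.Sentence) : ℝ :=
  Pr p n fun ω => SatLe ω ψ

/-! ### The circular languages `L₊^c` and `L≤^c` -/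

/-- The relations of `L₊^c`: adjacency and cyclic successor. -/
inductive plusCRel : ℕ → Type
  | adj : plusCRel 2
  | succ : plusCRel 2

/-- The language `L₊^c`, with adjacency and cyclic successor (`x = y + 1 (mod n)`). -/
def LplusC : Language := ⟨fun _ => Empty, plusCRel⟩

/-- An outcome `ω` of the circular random graph on `[n]`, as an `L₊^c`-structure. -/
def plusCStructure {n : ℕ} (ω : Sample n) : LplusC.Structure (Fin n) where
  funMap := fun f _ => Empty.elim f
  RelMap
    | .adj => fun x => sampleAdj ω (x 0) (x 1)
    | .succ => fun x => (x 0).val = ((x 1).val + 1) % n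

/-- The probability that `C(n, p̄)` satisfies a sentence `ψ` of the language `L₊^c`. -/
noncomputable def cProbPlus (p : ℕ → ℝ) (n : ℕ) (ψ : LplusC.Sentence) : ℝ :=
  cPr p n fun ω => @Language.Sentence.Realize _ _ (plusCStructure ω) ψ

/-- The relations of `L≤^c`: adjacency and the ternary clockwise-order predicate. -/
inductive cycRel : ℕ → Type
  | adj : cycRel 2
  | btw : cycRel 3

/-- The language `L≤^c`, with adjacency and the ternary clockwise-order predicate `C`. -/
def Lcyc : Language := ⟨fun _ => Empty, cycRel⟩

/-- `C(a, b, c)`: `a ≤ b ≤ c` holds after some cyclic permutation of `(a, b, c)`. -/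
def cyclicBtw {n : ℕ} (a b c : Fin n) : Prop :=
  (a ≤ b ∧ b ≤ c) ∨ (b ≤ c ∧ c ≤ a) ∨ (c ≤ a ∧ a ≤ b)

/-- An outcome `ω` of the circular random graph on `[n]`, as an `L≤^c`-structure. -/
def cycStructure {n : ℕ} (ω : Sample n) : Lcyc.Structure (Fin n) where
  funMap := fun f _ => Empty.elim f
  RelMap
    | .adj => fun x => sampleAdj ω (x 0) (x 1)
    | .btw => fun x => cyclicBtw (x 0) (x 1) (x 2)

/-- Satisfaction of a sentence of `L≤^c` in the outcome `ω`. -/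
def SatCyc {n : ℕ} (ω : Sample n) (ψ : Lcyc.Sentence) : Prop :=
  @Language.Sentence.Realize _ _ (cycStructure ω) ψ

/-- The probability that `C(n, p̄)` satisfies a sentence `ψ` of the language `L≤^c`. -/
noncomputable def cProbCyc (p : ℕ → ℝ) (n : ℕ) (ψ : Lcyc.Sentence) : ℝ :=
  cPr p n fun ω => SatCyc ω ψ


/-! ### Types of words -/

/-- Rank `k` types of words over `A`. -/
def Ty (A : Type) : ℕ → Type
  | 0 => Unit
  | k + 1 => Set (Ty A k × A × Ty A k)

/-- The rank `k` type of a word. -/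
def tp {A : Type} : (k : ℕ) → List A → Ty A k
  | 0, _ => ()
  | k + 1, w => {t | ∃ x a y, w = x ++ a :: y ∧ t = (tp k x, a, tp k y)}

theorem Ty_finite (A : Type) [Finite A] : ∀ k, Finite (Ty A k)
  | 0 => inferInstanceAs (Finite Unit)
  | k + 1 => by
    have := Ty_finite A k
    exact inferInstanceAs (Finite (Set (Ty A k × A × Ty A k)))

theorem tp_split {A : Type} {k : ℕ} {w w' : List A} (h : tp (k + 1) w = tp (k + 1) w')
    {x : List A} {a : A} {y : List A} (hw : w = x ++ a :: y) :
    ∃ x' y', w' = x' ++ a :: y' ∧ tp k x = tp k x' ∧ tp k y = tp k y' := by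
  have h1 : ((tp k x, a, tp k y) : Ty A k × A × Ty A k) ∈
      ({t | ∃ x a y, w = x ++ a :: y ∧ t = (tp k x, a, tp k y)} :
        Set (Ty A k × A × Ty A k)) := ⟨x, a, y, hw, rfl⟩
  change ({t | ∃ x a y, w = x ++ a :: y ∧ t = (tp k x, a, tp k y)} :
        Set (Ty A k × A × Ty A k)) = {t | ∃ x a y, w' = x ++ a :: y ∧ t = (tp k x, a, tp k y)} at h
  rw [h] at h1
  obtain ⟨x', a', y', hw', he⟩ := h1
  simp only [Prod.mk.injEq] at he
  obtain ⟨e1, rfl, e2⟩ := he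
  exact ⟨x', y', hw', e1, e2⟩

theorem tp_ext {A : Type} {k : ℕ} {w w' : List A}
    (h1 : ∀ x a y, w = x ++ a :: y →
      ∃ x' y', w' = x' ++ a :: y' ∧ tp k x = tp k x' ∧ tp k y = tp k y')
    (h2 : ∀ x a y, w' = x ++ a :: y →
      ∃ x' y', w = x' ++ a :: y' ∧ tp k x = tp k x' ∧ tp k y = tp k y') :
    tp (k + 1) w = tp (k + 1) w' := by
  change ({t | ∃ x a y, w = x ++ a :: y ∧ t = (tp k x, a, tp k y)} :
        Set (Ty A k × A × Ty A k)) = {t | ∃ x a y, w' = x ++ a :: y ∧ t = (tp k x, a, tp k y)}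
  ext t
  constructor
  · rintro ⟨x, a, y, hw, rfl⟩
    obtain ⟨x', y', hw', e1, e2⟩ := h1 x a y hw
    exact ⟨x', a, y', hw', by rw [e1, e2]⟩
  · rintro ⟨x, a, y, hw, rfl⟩
    obtain ⟨x', y', hw', e1, e2⟩ := h2 x a y hw
    exact ⟨x', a, y', hw', by rw [e1, e2]⟩

theorem tp_succ {A : Type} : ∀ {k : ℕ} {w w' : List A}, tp (k + 1) w = tp (k + 1) w' →
    tp k w = tp k w'
  | 0, _, _, _ => rfl
  | k + 1, w, w', h => by
    apply tp_ext
    · intro x a y hw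
      obtain ⟨x', y', hw', e1, e2⟩ := tp_split h hw
      exact ⟨x', y', hw', tp_succ e1, tp_succ e2⟩
    · intro x a y hw
      obtain ⟨x', y', hw', e1, e2⟩ := tp_split h.symm hw
      exact ⟨x', y', hw', tp_succ e1, tp_succ e2⟩

theorem tp_mono {A : Type} {k l : ℕ} (hkl : k ≤ l) {w w' : List A} (h : tp l w = tp l w') :
    tp k w = tp k w' := by
  induction l, hkl using Nat.le_induction with
  | base => exact h
  | succ l _ ih => exact ih (tp_succ h)

theorem tp_append_aux {A : Type} {k : ℕ}
    (ih : ∀ {u u' v v' : List A}, tp k u = tp k u' → tp k v = tp k v' →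
      tp k (u ++ v) = tp k (u' ++ v'))
    {u u' v v' : List A} (hu : tp (k + 1) u = tp (k + 1) u') (hv : tp (k + 1) v = tp (k + 1) v')
    (x : List A) (a : A) (y : List A) (hw : u ++ v = x ++ a :: y) :
    ∃ x' y', u' ++ v' = x' ++ a :: y' ∧ tp k x = tp k x' ∧ tp k y = tp k y' := by
  rcases List.append_eq_append_iff.mp hw with ⟨s, h1, h2⟩ | ⟨s, h1, h2⟩
  · obtain ⟨x', y', hw', e1, e2⟩ := tp_split hv h2
    refine ⟨u' ++ x', y', by simp [hw'], ?_, e2⟩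
    rw [h1]
    exact ih (tp_succ hu) e1
  · cases s with
    | nil =>
      simp only [List.nil_append] at h2
      obtain ⟨x', y', hw', e1, e2⟩ := tp_split (x := []) hv h2.symm
      refine ⟨u' ++ x', y', by simp [hw'], ?_, e2⟩
      have := ih (tp_succ hu) e1
      simpa [h1] using this
    | cons b s =>
      simp only [List.cons_append, List.cons.injEq] at h2
      obtain ⟨rfl, rfl⟩ := h2
      obtain ⟨x', y', hw', e1, e2⟩ := tp_split hu h1
      refine ⟨x', y' ++ v', by simp [hw'], e1, ?_⟩
      exact ih e2 (tp_succ hv)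

theorem tp_append {A : Type} : ∀ {k : ℕ} {u u' v v' : List A}, tp k u = tp k u' →
    tp k v = tp k v' → tp k (u ++ v) = tp k (u' ++ v')
  | 0, _, _, _, _, _, _ => rfl
  | k + 1, u, u', v, v', hu, hv => by
    apply tp_ext
    · exact tp_append_aux (fun h1 h2 => tp_append h1 h2) hu hv
    · exact tp_append_aux (fun h1 h2 => tp_append h1 h2) hu.symm hv.symm

theorem tp_length {A : Type} : ∀ {k : ℕ} {u v : List A}, tp k u = tp k v → u.length < k →
    u.length = v.length
  | 0, _, _, _, h => by omega
  | k + 1, [], v, h, _ => by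
    cases v with
    | nil => rfl
    | cons b v =>
      obtain ⟨x', y', hw', _⟩ := tp_split (x := []) h.symm rfl
      simp at hw'
  | k + 1, a :: u, v, h, hl => by
    obtain ⟨x', y', hw', e1, e2⟩ := tp_split (x := []) h rfl
    simp only [List.length_cons] at hl
    have h1 := tp_length e1 (by simp; omega)
    have h2 := tp_length e2 (by omega)
    simp [hw', h2, ← h1] 

/-- Powers of a word. -/
def wpow {A : Type} (x : List A) (m : ℕ) : List A := (List.replicate m x).flatten

theorem wpow_succ {A : Type} (x : List A) (m : ℕ) : wpow x (m + 1) = x ++ wpow x m := by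
  simp [wpow, List.replicate_succ]

theorem wpow_split {A : Type} (w : List A) : ∀ (m : ℕ) (x : List A) (a : A) (y : List A),
    wpow w m = x ++ a :: y → ∃ i j x1 y1, m = i + 1 + j ∧ w = x1 ++ a :: y1 ∧
      x = wpow w i ++ x1 ∧ y = y1 ++ wpow w j
  | 0, x, a, y, h => by simp [wpow] at h
  | m + 1, x, a, y, h => by
    rw [wpow_succ] at h
    have key : ∀ s, x = w ++ s → wpow w m = s ++ a :: y → ∃ i j x1 y1, m + 1 = i + 1 + j ∧
      w = x1 ++ a :: y1 ∧ x = wpow w i ++ x1 ∧ y = y1 ++ wpow w j := by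
      intro s h1 h2
      obtain ⟨i, j, x1, y1, e1, e2, e3, e4⟩ := wpow_split w m _ _ _ h2
      refine ⟨i + 1, j, x1, y1, by omega, e2, ?_, e4⟩
      rw [h1, e3, wpow_succ]; simp
    rcases List.append_eq_append_iff.mp h with ⟨s, h1, h2⟩ | ⟨s, h1, h2⟩
    · exact key s h1 h2
    · cases s with
      | nil => exact key [] (by simp [h1]) (by simpa using h2.symm)
      | cons b s =>
        simp only [List.cons_append, List.cons.injEq] at h2
        obtain ⟨rfl, rfl⟩ := h2
        exact ⟨0, m, x, s, by omega, h1, by simp [wpow], rfl⟩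

theorem wpow_join {A : Type} (w : List A) (i j : ℕ) :
    wpow w (i + 1 + j) = wpow w i ++ w ++ wpow w j := by
  simp [wpow, List.replicate_add]

theorem tp_wpow {A : Type} (w : List A) : ∀ (k m m' : ℕ), 2 ^ k ≤ m + 1 → 2 ^ k ≤ m' + 1 →
    tp k (wpow w m) = tp k (wpow w m')
  | 0, _, _, _, _ => rfl
  | k + 1, m, m', hm, hm' => by
    have main : ∀ m m', 2 ^ (k + 1) ≤ m + 1 → 2 ^ (k + 1) ≤ m' + 1 → ∀ x a y,
        wpow w m = x ++ a :: y → ∃ x' y', wpow w m' = x' ++ a :: y' ∧ tp k x = tp k x' ∧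
          tp k y = tp k y' := by
      intro m m' hm hm' x a y h
      obtain ⟨i, j, x1, y1, rfl, e2, e3, e4⟩ := wpow_split w m x a y h
      rw [pow_succ] at hm hm'
      have hpos := Nat.one_le_two_pow (n := k)
      have : ∃ i' j', m' = i' + 1 + j' ∧ tp k (wpow w i) = tp k (wpow w i') ∧
          tp k (wpow w j) = tp k (wpow w j') := by
        by_cases hi : i + 1 < 2 ^ k
        · refine ⟨i, m' - 1 - i, by omega, rfl, ?_⟩
          exact tp_wpow w k _ _ (by omega) (by omega)
        · by_cases hj : j + 1 < 2 ^ k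
          · refine ⟨m' - 1 - j, j, by omega, ?_, rfl⟩
            exact tp_wpow w k _ _ (by omega) (by omega)
          · refine ⟨m' - 1 - (2 ^ k - 1), 2 ^ k - 1, by omega, ?_, ?_⟩
            · exact tp_wpow w k _ _ (by omega) (by omega)
            · exact tp_wpow w k _ _ (by omega) (by omega)
      obtain ⟨i', j', rfl, f1, f2⟩ := this
      refine ⟨wpow w i' ++ x1, y1 ++ wpow w j', ?_, ?_, ?_⟩
      · rw [wpow_join]; nth_rewrite 2 [e2]; simp
      · rw [e3]; exact tp_append f1 rfl
      · rw [e4]; exact tp_append rfl f2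
    exact tp_ext (main m m' hm hm') (main m' m hm' hm)

/-! ### Aperiodic monoids -/

theorem aperiodic_zero {M : Type*} [Monoid M] [Finite M] {N : ℕ}
    (h : ∀ x : M, x ^ N = x ^ (N + 1)) : ∃ e : M, ∀ u, e * u * e = e := by
  classical
  let S : M → Set M := fun e => {x | ∃ m, x = e * m * e}
  obtain ⟨e0, he0⟩ : ∃ e0, ∀ e, (S e0).ncard ≤ (S e).ncard := by
    obtain ⟨e0, h0⟩ := Finite.exists_min (fun e => (S e).ncard)
    exact ⟨e0, h0⟩
  have hpow : ∀ (x : M) j, x ^ N = x ^ (N + j) := by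
    intro x j
    induction j with
    | zero => rfl
    | succ j ih => rw [ih, pow_add, h, ← pow_add]; congr 1; omega
  obtain ⟨f, hff, hfm⟩ : ∃ f : M, f * f = f ∧ ∀ e, (S f).ncard ≤ (S e).ncard := by
    refine ⟨e0 ^ (N + 1), ?_, fun e => le_trans ?_ (he0 e)⟩
    · rw [← pow_add, ← h, show N + 1 + (N + 1) = N + (N + 2) by omega, ← hpow]
    · apply Set.ncard_le_ncard _ (Set.toFinite _)
      rintro x ⟨m, rfl⟩
      refine ⟨e0 ^ N * m * e0 ^ N, ?_⟩
      rw [pow_succ' e0 N]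
      nth_rewrite 2 [← pow_succ']
      rw [pow_succ]
      simp only [mul_assoc]
  refine ⟨f, fun u => ?_⟩
  set g := f * u * f with hg
  have hsub : S g ⊆ S f := by
    rintro x ⟨m, rfl⟩
    refine ⟨u * f * m * f * u, ?_⟩
    simp only [hg, mul_assoc]
  have heq : S g = S f := Set.eq_of_subset_of_ncard_le hsub (hfm g) (Set.toFinite _)
  have hf : f ∈ S g := by rw [heq]; exact ⟨1, by simp [hff]⟩
  obtain ⟨m, hm⟩ := hf
  have hgf : f * g = g := by rw [hg]; simp only [← mul_assoc, hff]
  have hit : ∀ j, f = (g * m) ^ j * f * g ^ j := by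
    intro j
    induction j with
    | zero => simp
    | succ j ih =>
      calc f = (g * m) ^ j * (g * m * g) * g ^ j := by rw [← hm]; exact ih
        _ = (g * m) ^ j * (g * m * (f * g)) * g ^ j := by rw [hgf]
        _ = (g * m) ^ (j + 1) * f * g ^ (j + 1) := by
          rw [pow_succ, pow_succ']; simp only [mul_assoc]
  have h1 := hit N
  have hfg : f * g = f := by
    calc f * g = (g * m) ^ N * f * g ^ N * g := by rw [← h1]
      _ = (g * m) ^ N * f * g ^ (N + 1) := by rw [pow_succ]; simp only [mul_assoc]
      _ = f := by rw [← h, ← h1]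
  rw [← hgf, hfg]

theorem exists_absorbing {A : Type} [Finite A] (K : ℕ) (Good : A → Prop) :
    ∃ z : List A, (∀ a ∈ z, Good a) ∧ ∀ u : List A, (∀ a ∈ u, Good a) →
      tp K (z ++ u ++ z) = tp K z := by
  classical
  let c : Con (FreeMonoid A) :=
    { r := fun u v => tp K (FreeMonoid.toList u) = tp K (FreeMonoid.toList v)
      iseqv := ⟨fun _ => rfl, fun h => h.symm, fun h1 h2 => h1.trans h2⟩
      mul' := fun h1 h2 => by
        simp only [FreeMonoid.toList_mul]
        exact tp_append h1 h2 }
  have hc : ∀ u v : FreeMonoid A, (u : c.Quotient) = v ↔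
      tp K (FreeMonoid.toList u) = tp K (FreeMonoid.toList v) := fun u v => c.eq
  have := Ty_finite A K
  have hfin : Finite c.Quotient := by
    let F : c.Quotient → Ty A K := fun q => Con.liftOn q (fun u => tp K (FreeMonoid.toList u))
      (fun a b h => h)
    apply Finite.of_injective F
    intro a b
    induction a using Con.induction_on with | _ a =>
    induction b using Con.induction_on with | _ b =>
    intro h
    exact (hc a b).2 h
  let G : Submonoid (FreeMonoid A) :=
    { carrier := {u | ∀ a ∈ FreeMonoid.toList u, Good a}
      one_mem' := by simp
      mul_mem' := by
        intro u v hu hv a ha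
        simp only [FreeMonoid.toList_mul, List.mem_append] at ha
        exact ha.elim (hu a) (hv a) }
  let M := G.map c.mk'
  have hpw : ∀ (u : FreeMonoid A) (m : ℕ), FreeMonoid.toList (u ^ m) =
      wpow (FreeMonoid.toList u) m := by
    intro u m
    induction m with
    | zero => simp [wpow]
    | succ m ih => rw [pow_succ', FreeMonoid.toList_mul, ih, wpow_succ]
  have hper : ∀ x : c.Quotient, x ^ (2 ^ K) = x ^ (2 ^ K + 1) := by
    intro x
    induction x using Con.induction_on with | _ u =>
    change (c.mk' u) ^ (2 ^ K) = (c.mk' u) ^ (2 ^ K + 1)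
    rw [← map_pow, ← map_pow]
    refine (hc _ _).2 ?_
    rw [hpw, hpw]
    exact tp_wpow _ _ _ _ (by omega) (by omega)
  obtain ⟨⟨e, z, hz, rfl⟩, he⟩ := aperiodic_zero (M := M) (N := 2 ^ K) (by
    intro x
    apply Subtype.ext
    simpa using hper x.1)
  refine ⟨FreeMonoid.toList z, hz, fun u hu => ?_⟩
  have := congrArg Subtype.val (he ⟨c.mk' (FreeMonoid.ofList u), FreeMonoid.ofList u, hu, rfl⟩)
  exact (hc (z * FreeMonoid.ofList u * z) z).1 this

/-! ### Segments of words and the back-and-forth system -/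

/-- The word `W a, …, W (b-1)`. -/
def seg {A : Type} (W : ℕ → A) (a b : ℕ) : List A := (List.range' a (b - a)).map W

theorem seg_length {A : Type} (W : ℕ → A) (a b : ℕ) : (seg W a b).length = b - a := by
  simp [seg]

theorem seg_append {A : Type} (W : ℕ → A) {a b c : ℕ} (h1 : a ≤ b) (h2 : b ≤ c) :
    seg W a b ++ seg W b c = seg W a c := by
  obtain ⟨i, rfl⟩ := Nat.exists_eq_add_of_le h1
  obtain ⟨j, rfl⟩ := Nat.exists_eq_add_of_le h2
  simp only [seg, ← List.map_append]
  congr 1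
  have := List.range'_append_1 (s := a) (m := i) (n := j)
  rw [show a + i - a = i by omega, show a + i + j - (a + i) = j by omega,
    show a + i + j - a = i + j by omega, this]

theorem seg_cons {A : Type} (W : ℕ → A) {a b : ℕ} (h : a < b) :
    seg W a b = W a :: seg W (a + 1) b := by
  obtain ⟨j, rfl⟩ := Nat.exists_eq_add_of_lt h
  simp only [seg]
  rw [show a + j + 1 - a = j + 1 by omega, show a + j + 1 - (a + 1) = j by omega,
    List.range'_succ, List.map_cons]

theorem seg_split {A : Type} (W : ℕ → A) {a b c : ℕ} (h1 : a ≤ c) (h2 : c < b) :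
    seg W a b = seg W a c ++ W c :: seg W (c + 1) b := by
  rw [← seg_cons W h2, seg_append W h1 h2.le]

theorem seg_unsplit {A : Type} (W : ℕ → A) {a b : ℕ} {x : List A} {s : A} {y : List A}
    (h : seg W a b = x ++ s :: y) : ∃ c, a ≤ c ∧ c < b ∧ x = seg W a c ∧ s = W c ∧
      y = seg W (c + 1) b := by
  have hl := congrArg List.length h
  simp only [seg_length, List.length_append, List.length_cons] at hl
  refine ⟨a + x.length, by omega, by omega, ?_⟩
  rw [seg_split W (c := a + x.length) (by omega) (by omega)] at h
  have := List.append_inj h (by simp [seg_length])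
  obtain ⟨h1, h2⟩ := this
  simp only [List.cons.injEq] at h2
  exact ⟨h1.symm, h2.1.symm, h2.2.symm⟩

/-- The back-and-forth invariant. -/
structure Inv {A : Type} (k : ℕ) (W : ℕ → A) (n : ℕ) (W' : ℕ → A) (m : ℕ)
    (P : Set (ℕ × ℕ)) : Prop where
  zero : (0, 0) ∈ P
  top : (n, m) ∈ P
  bdd : ∀ a b, (a, b) ∈ P → a ≤ n ∧ b ≤ m
  lt_iff : ∀ a b a' b', (a, b) ∈ P → (a', b') ∈ P → (a < a' ↔ b < b')
  tpe : ∀ a b a' b', (a, b) ∈ P → (a', b') ∈ P → a < a' → W a = W' b ∧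
    tp k (seg W (a + 1) a') = tp k (seg W' (b + 1) b')

theorem Inv.symm {A : Type} {k : ℕ} {W : ℕ → A} {n : ℕ} {W' : ℕ → A} {m : ℕ}
    {P : Set (ℕ × ℕ)} (h : Inv k W n W' m P) : Inv k W' m W n {q | (q.2, q.1) ∈ P} where
  zero := h.zero
  top := h.top
  bdd := fun a b hab => (h.bdd b a hab).symm
  lt_iff := fun a b a' b' h1 h2 => (h.lt_iff b a b' a' h1 h2).symm
  tpe := fun a b a' b' h1 h2 hlt => by
    have := h.tpe b a b' a' h1 h2 ((h.lt_iff b a b' a' h1 h2).2 hlt)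
    exact ⟨this.1.symm, this.2.symm⟩

theorem Inv.mono {A : Type} {k l : ℕ} {W : ℕ → A} {n : ℕ} {W' : ℕ → A} {m : ℕ}
    {P : Set (ℕ × ℕ)} (h : Inv l W n W' m P) (hkl : k ≤ l) : Inv k W n W' m P where
  zero := h.zero
  top := h.top
  bdd := h.bdd
  lt_iff := h.lt_iff
  tpe := fun a b a' b' h1 h2 hlt =>
    ⟨(h.tpe a b a' b' h1 h2 hlt).1, tp_mono hkl (h.tpe a b a' b' h1 h2 hlt).2⟩

theorem Inv.eq_iff {A : Type} {k : ℕ} {W : ℕ → A} {n : ℕ} {W' : ℕ → A} {m : ℕ}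
    {P : Set (ℕ × ℕ)} (h : Inv k W n W' m P) {a b a' b' : ℕ} (h1 : (a, b) ∈ P)
    (h2 : (a', b') ∈ P) : a = a' ↔ b = b' := by
  have := h.lt_iff a b a' b' h1 h2
  have := h.lt_iff a' b' a b h2 h1
  omega

theorem Inv.extend {A : Type} {k : ℕ} {W : ℕ → A} {n : ℕ} {W' : ℕ → A} {m : ℕ}
    {P : Set (ℕ × ℕ)} (h : Inv (k + 1) W n W' m P) {x : ℕ} (hx : x < n) :
    ∃ y, y < m ∧ ∃ Q, P ⊆ Q ∧ (x, y) ∈ Q ∧ Inv k W n W' m Q := by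
  classical
  by_cases hex : ∃ y, (x, y) ∈ P
  · obtain ⟨y, hy⟩ := hex
    exact ⟨y, (h.lt_iff x y n m hy h.top).1 hx, P, subset_rfl, hy, h.mono (by omega)⟩
  obtain ⟨a, ⟨b, hab⟩, hax, hamax⟩ : ∃ a, (∃ b, (a, b) ∈ P) ∧ a ≤ x ∧
      ∀ c, (∃ e, (c, e) ∈ P) → c ≤ x → c ≤ a := by
    refine ⟨Nat.findGreatest (fun a => ∃ b, (a, b) ∈ P) x, ?_, Nat.findGreatest_le x, ?_⟩
    · exact Nat.findGreatest_spec (P := fun a => ∃ b, (a, b) ∈ P) (Nat.zero_le x) ⟨0, h.zero⟩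
    · intro c hc hcx
      exact Nat.le_findGreatest hcx hc
  have hexx : ∃ a', x ≤ a' ∧ ∃ b', (a', b') ∈ P := ⟨n, hx.le, m, h.top⟩
  obtain ⟨a', ⟨b', hab'⟩, hxa', hamin⟩ : ∃ a', (∃ b', (a', b') ∈ P) ∧ x ≤ a' ∧
      ∀ c, (∃ e, (c, e) ∈ P) → x ≤ c → a' ≤ c := by
    refine ⟨Nat.find hexx, (Nat.find_spec hexx).2, (Nat.find_spec hexx).1, ?_⟩
    intro c hc hcx
    exact Nat.find_min' hexx ⟨hcx, hc⟩
  have hax' : a < x := by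
    rcases hax.lt_or_eq with h1 | h1
    · exact h1
    · exact absurd ⟨b, h1 ▸ hab⟩ hex
  have hxa'' : x < a' := by
    rcases hxa'.lt_or_eq with h1 | h1
    · exact h1
    · exact absurd ⟨b', h1 ▸ hab'⟩ hex
  obtain ⟨hW, ht⟩ := h.tpe a b a' b' hab hab' (by omega)
  obtain ⟨u, v, hs, e1, e2⟩ := tp_split ht (seg_split W (c := x) (by omega) (by omega))
  obtain ⟨y, hy1, hy2, rfl, hy3, rfl⟩ := seg_unsplit W' hs
  have hbm := (h.bdd a' b' hab').2
  have hbm2 := (h.bdd a b hab).2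
  -- comparison of the new point with the old ones
  have hcmp : ∀ c e, (c, e) ∈ P → (c ≤ a ∧ e ≤ b) ∨ (a' ≤ c ∧ b' ≤ e) := by
    intro c e hce
    rcases le_total c x with hcx | hcx
    · left
      have hca := hamax c ⟨e, hce⟩ hcx
      have := h.lt_iff a b c e hab hce
      exact ⟨hca, by omega⟩
    · right
      have hca := hamin c ⟨e, hce⟩ hcx
      have := h.lt_iff c e a' b' hce hab'
      exact ⟨hca, by omega⟩
  refine ⟨y, by omega, insert (x, y) P, Set.subset_insert _ _, Set.mem_insert _ _, ?_⟩
  refine ⟨Set.mem_insert_of_mem _ h.zero, Set.mem_insert_of_mem _ h.top, ?_, ?_, ?_⟩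
  · rintro c e (hce | hce)
    · simp only [Prod.mk.injEq] at hce; omega
    · exact h.bdd c e hce
  · rintro c e c' e' (hce | hce) (hce' | hce')
    · simp only [Prod.mk.injEq] at hce hce'; omega
    · simp only [Prod.mk.injEq] at hce
      have := hcmp c' e' hce'
      omega
    · simp only [Prod.mk.injEq] at hce'
      have := hcmp c e hce
      omega
    · exact h.lt_iff c e c' e' hce hce'
  · rintro c e c' e' (hce | hce) (hce' | hce') hlt
    · simp only [Prod.mk.injEq] at hce hce'; omega
    · simp only [Prod.mk.injEq] at hce
      obtain ⟨rfl, rfl⟩ := hce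
      refine ⟨hy3, ?_⟩
      have hc := hcmp c' e' hce'
      rcases Nat.lt_or_ge a' c' with h1 | h1
      · have hb := (h.lt_iff _ _ _ _ hab' hce').1 h1
        obtain ⟨f1, f2⟩ := h.tpe _ _ _ _ hab' hce' h1
        rw [seg_split W (c := a') (by omega) h1, seg_split W' (c := b') (by omega) hb, f1]
        exact tp_append e2 (tp_append (u := [_]) rfl (tp_succ f2))
      · have h2 : a' = c' := by omega
        have h3 := (h.eq_iff hab' hce').1 h2
        subst h2 h3
        exact e2
    · simp only [Prod.mk.injEq] at hce'
      obtain ⟨rfl, rfl⟩ := hce'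
      have hc := hcmp c e hce
      rcases Nat.lt_or_ge c a with h1 | h1
      · have hb := (h.lt_iff _ _ _ _ hce hab).1 h1
        obtain ⟨f1, f2⟩ := h.tpe _ _ _ _ hce hab h1
        refine ⟨f1, ?_⟩
        rw [seg_split W (c := a) (by omega) hax', seg_split W' (c := b) (by omega) (by omega), hW]
        exact tp_append (tp_succ f2) (tp_append (u := [_]) rfl e1)
      · have h2 : a = c := by omega
        have h3 := (h.eq_iff hab hce).1 h2
        subst h2 h3
        exact ⟨hW, e1⟩
    · obtain ⟨f1, f2⟩ := h.tpe _ _ _ _ hce hce' hlt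
      exact ⟨f1, tp_succ f2⟩

theorem Inv.initial {A : Type} {k : ℕ} {W : ℕ → A} {n : ℕ} {W' : ℕ → A} {m : ℕ}
    (hn : 0 < n) (hm : 0 < m) (h : tp (k + 2) (seg W 0 n) = tp (k + 2) (seg W' 0 m)) :
    Inv k W n W' m {(0, 0), (n, m)} := by
  obtain ⟨u, v, hs, e1, e2⟩ := tp_split (x := []) h (seg_cons W hn)
  obtain ⟨y, hy1, hy2, rfl, hy3, rfl⟩ := seg_unsplit W' hs
  have hl := tp_length e1 (by simp)
  simp only [List.length_nil, seg_length] at hl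
  obtain rfl : y = 0 := by omega
  refine ⟨by simp, by simp, ?_, ?_, ?_⟩
  · intro a b hab
    simp only [Set.mem_insert_iff, Prod.mk.injEq, Set.mem_singleton_iff] at hab
    omega
  · intro a b a' b' hab hab'
    simp only [Set.mem_insert_iff, Prod.mk.injEq, Set.mem_singleton_iff] at hab hab'
    omega
  · intro a b a' b' hab hab' hlt
    simp only [Set.mem_insert_iff, Prod.mk.injEq, Set.mem_singleton_iff] at hab hab'
    have : a = 0 ∧ b = 0 ∧ a' = n ∧ b' = m := by omega
    obtain ⟨rfl, rfl, rfl, rfl⟩ := this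
    exact ⟨hy3, tp_succ e2⟩

theorem Inv.dist {A : Type} {k : ℕ} {W : ℕ → A} {n : ℕ} {W' : ℕ → A} {m : ℕ}
    {P : Set (ℕ × ℕ)} (h : Inv k W n W' m P) {a b a' b' : ℕ} (h1 : (a, b) ∈ P)
    (h2 : (a', b') ∈ P) (hle : a ≤ a') (hk : a' ≤ a + k) : b' = b + (a' - a) := by
  rcases hle.lt_or_eq with hlt | heq
  · have hb := (h.lt_iff _ _ _ _ h1 h2).1 hlt
    have := tp_length (h.tpe _ _ _ _ h1 h2 hlt).2 (by rw [seg_length]; omega)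
    rw [seg_length, seg_length] at this
    omega
  · have := (h.eq_iff h1 h2).1 heq
    omega

/-! ### The circular graph of a word -/

/-- Adjacency in the circular graph coded by the word `W` of length `n`. -/
def gAdj {N : ℕ} (W : ℕ → Fin N → Bool) (n : ℕ) (i j : ℕ) : Prop :=
  (∃ d : Fin N, j = (i + d + 1) % n ∧ W i d = true) ∨
    (∃ d : Fin N, i = (j + d + 1) % n ∧ W j d = true)

theorem Inv.step {N : ℕ} {k : ℕ} {W : ℕ → Fin N → Bool} {n : ℕ} {W' : ℕ → Fin N → Bool} {m : ℕ}
    {P : Set (ℕ × ℕ)} (h : Inv k W n W' m P) (hk : N ≤ k) (hn : N < n) (hm : N < m)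
    {a b a' b' : ℕ} (h1 : (a, b) ∈ P) (h2 : (a', b') ∈ P) (ha : a < n) (ha' : a' < n)
    (d : Fin N) (hd : a' = (a + d + 1) % n ∧ W a d = true) :
    b' = (b + d + 1) % m ∧ W' b d = true := by
  obtain ⟨hd1, hd2⟩ := hd
  have hdN := d.2
  have hb := (h.lt_iff _ _ _ _ h1 h.top).1 ha
  have hb' := (h.lt_iff _ _ _ _ h2 h.top).1 ha'
  refine ⟨?_, by rw [← (h.tpe _ _ _ _ h1 h.top ha).1]; exact hd2⟩
  rcases Nat.lt_or_ge (a + d + 1) n with hlt | hge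
  · rw [Nat.mod_eq_of_lt hlt] at hd1
    have := h.dist h1 h2 (by omega) (by omega)
    rw [Nat.mod_eq_of_lt (by omega)]
    omega
  · rw [Nat.mod_eq_sub_mod hge, Nat.mod_eq_of_lt (by omega)] at hd1
    have e1 := h.dist h1 h.top (by omega) (by omega)
    have e2 := h.dist h.zero h2 (by omega) (by omega)
    rw [Nat.mod_eq_sub_mod (by omega), Nat.mod_eq_of_lt (by omega)]
    omega

theorem Inv.adj {N : ℕ} {k : ℕ} {W : ℕ → Fin N → Bool} {n : ℕ} {W' : ℕ → Fin N → Bool} {m : ℕ}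
    {P : Set (ℕ × ℕ)} (h : Inv k W n W' m P) (hk : N ≤ k) (hn : N < n) (hm : N < m)
    {a b a' b' : ℕ} (h1 : (a, b) ∈ P) (h2 : (a', b') ∈ P) (ha : a < n) (ha' : a' < n)
    (hg : gAdj W n a a') : gAdj W' m b b' := by
  rcases hg with ⟨d, hd⟩ | ⟨d, hd⟩
  · exact Or.inl ⟨d, h.step hk hn hm h1 h2 ha ha' d hd⟩
  · exact Or.inr ⟨d, h.step hk hn hm h2 h1 ha' ha d hd⟩

/-- The `L≤^c`-structure on `Fin n` with a given adjacency relation. -/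
@[reducible] def relStr {n : ℕ} (R : Fin n → Fin n → Prop) : Lcyc.Structure (Fin n) where
  funMap := fun f _ => Empty.elim f
  RelMap
    | .adj => fun x => R (x 0) (x 1)
    | .btw => fun x => cyclicBtw (x 0) (x 1) (x 2)

/-- The `L≤^c`-structure of a word. -/
@[reducible] def wStr {N : ℕ} (W : ℕ → Fin N → Bool) (n : ℕ) : Lcyc.Structure (Fin n) :=
  relStr fun i j => gAdj W n i j

theorem term_var {α : Type} (t : Lcyc.Term α) : ∃ i, t = Language.Term.var i := by
  cases t with
  | var i => exact ⟨i, rfl⟩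
  | func f _ => exact Empty.elim f

theorem game {N : ℕ} : ∀ {r : ℕ} (φ : Lcyc.BoundedFormula Empty r), ∃ K, ∀ k, K ≤ k →
    ∀ (W W' : ℕ → Fin N → Bool) (n m : ℕ), N < n → N < m → ∀ P, Inv k W n W' m P →
    ∀ (e : Empty → Fin n) (e' : Empty → Fin m) (xs : Fin r → Fin n) (ys : Fin r → Fin m),
    (∀ i, ((xs i : ℕ), (ys i : ℕ)) ∈ P) →
    (@Language.BoundedFormula.Realize Lcyc (Fin n) (wStr W n) _ _ φ e xs ↔
      @Language.BoundedFormula.Realize Lcyc (Fin m) (wStr W' m) _ _ φ e' ys) := by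
  intro r φ
  induction φ with
  | falsum => exact ⟨0, fun k _ W W' n m _ _ P _ e e' xs ys _ => Iff.rfl⟩
  | equal t₁ t₂ =>
    refine ⟨0, fun k _ W W' n m _ _ P hP e e' xs ys hxy => ?_⟩
    obtain ⟨i | i, rfl⟩ := term_var t₁
    · exact i.elim
    obtain ⟨j | j, rfl⟩ := term_var t₂
    · exact j.elim
    have := hP.eq_iff (hxy i) (hxy j)
    simpa [Language.BoundedFormula.Realize, Fin.ext_iff] using this
  | rel R ts =>
    refine ⟨N, fun k hk W W' n m hn hm P hP e e' xs ys hxy => ?_⟩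
    have hts : ∀ l, ∃ i, ts l = Language.Term.var (Sum.inr i) := by
      intro l
      obtain ⟨i | i, hi⟩ := term_var (ts l)
      · exact i.elim
      · exact ⟨i, hi⟩
    choose g hg using hts
    have hr1 : ∀ l, @Language.Term.realize Lcyc (Fin n) (wStr W n) _ (Sum.elim e xs) (ts l) =
        xs (g l) := fun l => by rw [hg]; rfl
    have hr2 : ∀ l, @Language.Term.realize Lcyc (Fin m) (wStr W' m) _ (Sum.elim e' ys) (ts l) =
        ys (g l) := fun l => by rw [hg]; rfl
    simp only [Language.BoundedFormula.Realize, hr1, hr2]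
    cases R with
    | adj =>
      constructor
      · exact hP.adj hk hn hm (hxy _) (hxy _) (xs _).2 (xs _).2
      · exact hP.symm.adj hk hm hn (hxy _) (hxy _) (ys _).2 (ys _).2
    | btw =>
      change cyclicBtw _ _ _ ↔ cyclicBtw _ _ _
      have h1 := hP.lt_iff _ _ _ _ (hxy (g 1)) (hxy (g 0))
      have h2 := hP.lt_iff _ _ _ _ (hxy (g 2)) (hxy (g 1))
      have h3 := hP.lt_iff _ _ _ _ (hxy (g 0)) (hxy (g 2))
      simp only [cyclicBtw, Fin.le_def]
      omega
  | imp f₁ f₂ ih₁ ih₂ =>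
    obtain ⟨K₁, h₁⟩ := ih₁
    obtain ⟨K₂, h₂⟩ := ih₂
    refine ⟨max K₁ K₂, fun k hk W W' n m hn hm P hP e e' xs ys hxy => ?_⟩
    have e1 := h₁ k (le_trans (le_max_left _ _) hk) W W' n m hn hm P hP e e' xs ys hxy
    have e2 := h₂ k (le_trans (le_max_right _ _) hk) W W' n m hn hm P hP e e' xs ys hxy
    simp only [Language.BoundedFormula.Realize]
    rw [e1, e2]
  | all f ih =>
    obtain ⟨K, hK⟩ := ih
    refine ⟨K + 1, fun k hk W W' n m hn hm P hP e e' xs ys hxy => ?_⟩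
    obtain ⟨k, rfl⟩ : ∃ k', k = k' + 1 := ⟨k - 1, by omega⟩
    simp only [Language.BoundedFormula.Realize]
    constructor
    · intro H y
      obtain ⟨x, hx, Q, hPQ, hQ, hI⟩ := hP.symm.extend y.2
      have hI' := hI.symm
      refine (hK k (by omega) W W' n m hn hm _ hI' e e' (Fin.snoc xs ⟨x, hx⟩)
        (Fin.snoc ys y) ?_).1 (H ⟨x, hx⟩)
      intro i
      refine Fin.lastCases ?_ (fun i => ?_) i
      · simpa using hQ
      · simpa using hPQ (hxy i)
    · intro H x
      obtain ⟨y, hy, Q, hPQ, hQ, hI⟩ := hP.extend x.2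
      refine (hK k (by omega) W W' n m hn hm _ hI e e' (Fin.snoc xs x)
        (Fin.snoc ys ⟨y, hy⟩) ?_).2 (H ⟨y, hy⟩)
      intro i
      refine Fin.lastCases ?_ (fun i => ?_) i
      · simpa using hQ
      · simpa using hPQ (hxy i)

/-- Satisfaction of a sentence in the circular graph of a word. -/
def WSat {N : ℕ} (ψ : Lcyc.Sentence) (W : ℕ → Fin N → Bool) (n : ℕ) : Prop :=
  @Language.Sentence.Realize _ _ (wStr W n) ψ

theorem WSat_congr {N : ℕ} (ψ : Lcyc.Sentence) : ∃ K, ∀ (W W' : ℕ → Fin N → Bool) (n m : ℕ),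
    N < n → N < m → tp K (seg W 0 n) = tp K (seg W' 0 m) → (WSat ψ W n ↔ WSat ψ W' m) := by
  obtain ⟨K, hK⟩ := game (N := N) ψ
  refine ⟨K + 2, fun W W' n m hn hm h => ?_⟩
  exact hK K le_rfl W W' n m hn hm _ (Inv.initial (by omega) (by omega) h) _ _ _ _
    (fun i => i.elim0)

/-! ### Rotations -/

theorem rot_cases {n i r : ℕ} (hi : i < n) (hr : r < n) :
    (i + r < n ∧ (i + r) % n = i + r) ∨ (n ≤ i + r ∧ (i + r) % n = i + r - n) := by
  rcases Nat.lt_or_ge (i + r) n with h | h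
  · exact Or.inl ⟨h, Nat.mod_eq_of_lt h⟩
  · refine Or.inr ⟨h, ?_⟩
    rw [Nat.mod_eq_sub_mod h, Nat.mod_eq_of_lt (by omega)]

theorem rot_step {n r : ℕ} (hr : r < n) (i j d : ℕ) (hj : j < n) :
    (j + r) % n = ((i + r) % n + d + 1) % n ↔ j = (i + d + 1) % n := by
  have e : ((i + r) % n + d + 1) % n = ((i + d + 1) % n + r) % n := by
    rw [Nat.mod_add_mod, add_assoc, Nat.mod_add_mod]
    congr 1; omega
  rw [e]
  have hx : (i + d + 1) % n < n := Nat.mod_lt _ (by omega)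
  have h1 := rot_cases hj hr
  have h2 := rot_cases hx hr
  constructor
  · intro h; omega
  · intro h; rw [← h]

theorem WSat_rot {N : ℕ} (ψ : Lcyc.Sentence) (W : ℕ → Fin N → Bool) (n r : ℕ) (hr : r < n) :
    WSat ψ (fun i => W ((i + r) % n)) n ↔ WSat ψ W n := by
  let s : Fin n → Fin n := fun i => ⟨(i + r) % n, Nat.mod_lt _ (by omega)⟩
  have hs : Function.Injective s := by
    intro i j hij
    have h1 := rot_cases i.2 hr
    have h2 := rot_cases j.2 hr
    have h3 : (i.1 + r) % n = (j.1 + r) % n := congrArg Fin.val hij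
    apply Fin.ext
    omega
  let S : Fin n ≃ Fin n := Equiv.ofBijective s (Finite.injective_iff_bijective.1 hs)
  let E : @Language.Equiv Lcyc (Fin n) (Fin n) (wStr (fun i => W ((i + r) % n)) n) (wStr W n) :=
    @Language.Equiv.mk Lcyc (Fin n) (Fin n) (wStr (fun i => W ((i + r) % n)) n) (wStr W n) S
      (fun f _ => Empty.elim f)
      (by
        intro k R x
        cases R with
        | adj =>
          change gAdj W n ((x 0 + r) % n) ((x 1 + r) % n) ↔
            gAdj (fun i => W ((i + r) % n)) n (x 0) (x 1)
          simp only [gAdj, rot_step hr _ _ _ (x 0).2, rot_step hr _ _ _ (x 1).2]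
        | btw =>
          change cyclicBtw (s (x 0)) (s (x 1)) (s (x 2)) ↔ cyclicBtw (x 0) (x 1) (x 2)
          have h0 := rot_cases (x 0).2 hr
          have h1 := rot_cases (x 1).2 hr
          have h2 := rot_cases (x 2).2 hr
          have b0 := (x 0).2
          have b1 := (x 1).2
          have b2 := (x 2).2
          simp only [cyclicBtw, Fin.le_def, s]
          omega)
  exact @Language.StrongHomClass.realize_sentence Lcyc (Fin n) (Fin n)
    (wStr (fun i => W ((i + r) % n)) n) (wStr W n) _ _ _ E ψ

/-- The letters of a list as a function. -/
def wf {N : ℕ} (w : List (Fin N → Bool)) : ℕ → Fin N → Bool := fun i => w.getD i default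

theorem seg_wf {N : ℕ} (w : List (Fin N → Bool)) : seg (wf w) 0 w.length = w := by
  apply List.ext_getElem
  · simp [seg_length]
  · intro i h1 h2
    simp [seg, wf, h2]

/-- Satisfaction of a sentence in the circular graph of a word given as a list. -/
def LSat {N : ℕ} (ψ : Lcyc.Sentence) (w : List (Fin N → Bool)) : Prop := WSat ψ (wf w) w.length

theorem LSat_rot {N K : ℕ} (ψ : Lcyc.Sentence) (hK : ∀ (W W' : ℕ → Fin N → Bool) (n m : ℕ),
    N < n → N < m → tp K (seg W 0 n) = tp K (seg W' 0 m) → (WSat ψ W n ↔ WSat ψ W' m))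
    (u v : List (Fin N → Bool)) (hN : N < u.length + v.length) :
    LSat ψ (u ++ v) ↔ LSat ψ (v ++ u) := by
  rcases Nat.eq_zero_or_pos v.length with h0 | hpos
  · obtain rfl := List.eq_nil_of_length_eq_zero h0
    simp
  have hr : u.length < (u ++ v).length := by simp; omega
  unfold LSat
  rw [← WSat_rot ψ (wf (u ++ v)) _ u.length hr]
  apply hK
  · simp; omega
  · simp; omega
  · rw [seg_wf]
    congr 1
    apply List.ext_getElem
    · simp [seg_length]; omega
    · intro i h1 h2
      have hi : i < (u ++ v).length := by simp [seg_length] at h1 ⊢; omega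
      have hc := rot_cases hi hr
      simp only [List.length_append] at hi hc
      simp only [seg, wf, List.getElem_map, List.getElem_range', List.length_append, Nat.zero_add,
        Nat.one_mul]
      rcases hc with ⟨c1, c2⟩ | ⟨c1, c2⟩
      · rw [c2, List.getD_eq_getElem _ _ (by simp; omega), List.getElem_append_right (by omega),
          List.getElem_append_left (by omega)]
        simp
      · rw [c2, List.getD_eq_getElem _ _ (by simp; omega), List.getElem_append_left (by omega),
          List.getElem_append_right (by omega)]
        congr 1; omega

theorem exists_magic {N : ℕ} (ψ : Lcyc.Sentence) (Good : (Fin N → Bool) → Prop) :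
    ∃ (z : List (Fin N → Bool)) (τ : Prop), (∀ a ∈ z, Good a) ∧
      ∀ (W : ℕ → Fin N → Bool) (n : ℕ), N < n → (∀ i < n, Good (W i)) →
        (∃ s, s + z.length ≤ n ∧ seg W s (s + z.length) = z) → (WSat ψ W n ↔ τ) := by
  obtain ⟨K, hK⟩ := WSat_congr (N := N) ψ
  obtain ⟨z, hz, habs⟩ := exists_absorbing K Good
  have hcong : ∀ u v : List (Fin N → Bool), N < u.length → N < v.length → tp K u = tp K v →
      (LSat ψ u ↔ LSat ψ v) := by
    intro u v hu hv h
    exact hK _ _ _ _ hu hv (by rw [seg_wf, seg_wf]; exact h)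
  have hrot := fun u v => LSat_rot ψ hK u v
  have key : ∀ u v : List (Fin N → Bool), (∀ a ∈ u, Good a) → (∀ a ∈ v, Good a) →
      N < (z ++ u).length → N < (z ++ v).length → (LSat ψ (z ++ u) ↔ LSat ψ (z ++ v)) := by
    intro u v hu hv h1 h2
    have e1 : tp K (z ++ u) = tp K ((z ++ v) ++ (z ++ u)) := by
      have := tp_append (habs v hv).symm (rfl : tp K u = tp K u)
      simpa using this
    have e2 : tp K (z ++ v) = tp K ((z ++ u) ++ (z ++ v)) := by
      have := tp_append (habs u hu).symm (rfl : tp K v = tp K v)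
      simpa using this
    rw [hcong _ _ h1 (by rw [List.length_append]; omega) e1,
      hcong _ _ h2 (by rw [List.length_append]; omega) e2]
    exact hrot _ _ (by omega)
  have red : ∀ (W : ℕ → Fin N → Bool) (n : ℕ), N < n → (∀ i < n, Good (W i)) →
        (∃ s, s + z.length ≤ n ∧ seg W s (s + z.length) = z) → ∃ u, (∀ a ∈ u, Good a) ∧
          N < (z ++ u).length ∧ (WSat ψ W n ↔ LSat ψ (z ++ u)) := by
    rintro W n hn hg ⟨s, hs, hsz⟩
    have hgs : ∀ a b, b ≤ n → ∀ x ∈ seg W a b, Good x := by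
      intro a b hb x hx
      simp only [seg, List.mem_map, List.mem_range'_1] at hx
      obtain ⟨i, hi, rfl⟩ := hx
      exact hg i (by omega)
    refine ⟨seg W (s + z.length) n ++ seg W 0 s, ?_, ?_, ?_⟩
    · intro a ha
      rcases List.mem_append.1 ha with h | h
      · exact hgs _ _ le_rfl a h
      · exact hgs _ _ (by omega) a h
    · simp only [List.length_append, seg_length]; omega
    · have h1 : seg W 0 n = seg W 0 s ++ (z ++ seg W (s + z.length) n) := by
        have h0 : z ++ seg W (s + z.length) n = seg W s (s + z.length) ++
            seg W (s + z.length) n := by rw [hsz]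
        rw [h0, seg_append W (by omega) hs, seg_append W (by omega) (by omega)]
      have h2 : WSat ψ W n ↔ LSat ψ (seg W 0 n) := by
        refine hK _ _ _ _ hn (by rw [seg_length]; omega) ?_
        rw [seg_wf]
      rw [h2, h1, hrot _ _ (by simp only [List.length_append, seg_length]; omega)]
      simp
  refine ⟨z, ∃ u, (∀ a ∈ u, Good a) ∧ N < (z ++ u).length ∧ LSat ψ (z ++ u), hz, ?_⟩
  intro W n hn hg hs
  obtain ⟨u, hu, hl, he⟩ := red W n hn hg hs
  rw [he]
  constructor
  · exact fun h => ⟨u, hu, hl, h⟩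
  · rintro ⟨v, hv, hl', h⟩
    exact (key u v hu hv hl hl').2 h

/-! ### Product weights -/

open scoped Classical in
theorem cyl_sum {ι : Type} [Fintype ι] [DecidableEq ι] (q : ι → Bool → ℝ) (hq : ∀ i, ∑ b, q i b = 1)
    (t : ι → Bool) (B : Finset ι) :
    (∑ ω : ι → Bool, if ∀ i ∈ B, ω i = t i then ∏ i, q i (ω i) else 0) =
      ∏ i ∈ B, q i (t i) := by
  have h1 : ∀ ω : ι → Bool, (if ∀ i ∈ B, ω i = t i then ∏ i, q i (ω i) else 0) =
      ∏ i, (if i ∈ B then (if ω i = t i then q i (ω i) else 0) else q i (ω i)) := by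
    intro ω
    split_ifs with h
    · refine Finset.prod_congr rfl fun i _ => ?_
      split_ifs with h1 h2
      · rfl
      · exact absurd (h i h1) h2
      · rfl
    · push Not at h
      obtain ⟨i, hi, hne⟩ := h
      exact (Finset.prod_eq_zero (Finset.mem_univ i) (by simp [hi, hne])).symm
  rw [Finset.sum_congr rfl fun ω _ => h1 ω]
  have h2 := Finset.prod_univ_sum (fun _ : ι => (Finset.univ : Finset Bool))
    (fun i b => if i ∈ B then (if b = t i then q i b else 0) else q i b)
  rw [Fintype.piFinset_univ] at h2
  rw [← h2]
  have h3 : ∀ i, (∑ b, if i ∈ B then (if b = t i then q i b else 0) else q i b) =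
      if i ∈ B then q i (t i) else 1 := by
    intro i
    by_cases hi : i ∈ B
    · simp [hi]
    · simp only [hi, if_false]; exact hq i
  rw [Finset.prod_congr rfl fun i _ => h3 i]
  simp

theorem ite_aux (a b c : Prop) (x : ℝ) [Decidable ((a ∧ ¬ b) ∧ c)] [Decidable (a ∧ c)]
    [Decidable (a ∧ b ∧ c)] : (if (a ∧ ¬ b) ∧ c then x else 0) =
      (if a ∧ c then x else 0) - (if a ∧ b ∧ c then x else 0) := by
  by_cases ha : a <;> by_cases hb : b <;> by_cases hc : c <;> simp [ha, hb, hc]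

open scoped Classical in
theorem avoid_sum {ι : Type} [Fintype ι] [DecidableEq ι] (q : ι → Bool → ℝ) (hq : ∀ i, ∑ b, q i b = 1)
    (t : ι → Bool) (B : ℕ → Finset ι) : ∀ (m : ℕ) (C : Finset ι),
    (∀ i j, i < j → j < m → Disjoint (B i) (B j)) → (∀ j < m, Disjoint (B j) C) →
    (∑ ω : ι → Bool, if (∀ j < m, ¬ ∀ i ∈ B j, ω i = t i) ∧ ∀ i ∈ C, ω i = t i
      then ∏ i, q i (ω i) else 0) =
      (∏ j ∈ Finset.range m, (1 - ∏ i ∈ B j, q i (t i))) * ∏ i ∈ C, q i (t i) := by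
  intro m
  induction m with
  | zero =>
    intro C _ _
    simpa using cyl_sum q hq t C
  | succ m ih =>
    intro C hB hC
    have h1 := ih C (fun i j h1 h2 => hB i j h1 (by omega)) (fun j hj => hC j (by omega))
    have h2 := ih (B m ∪ C) (fun i j h1 h2 => hB i j h1 (by omega)) (fun j hj => by
      rw [Finset.disjoint_union_right]
      exact ⟨hB j m hj (by omega), hC j (by omega)⟩)
    rw [Finset.prod_union (hC m (by omega))] at h2
    rw [Finset.prod_range_succ]
    have h3 : ∀ ω : ι → Bool, (if (∀ j < m + 1, ¬ ∀ i ∈ B j, ω i = t i) ∧ ∀ i ∈ C, ω i = t i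
      then ∏ i, q i (ω i) else 0) = (if (∀ j < m, ¬ ∀ i ∈ B j, ω i = t i) ∧ ∀ i ∈ C, ω i = t i
      then ∏ i, q i (ω i) else 0) - (if (∀ j < m, ¬ ∀ i ∈ B j, ω i = t i) ∧
        ∀ i ∈ B m ∪ C, ω i = t i then ∏ i, q i (ω i) else 0) := by
      intro ω
      have e1 : (∀ j < m + 1, ¬ ∀ i ∈ B j, ω i = t i) ↔
          (∀ j < m, ¬ ∀ i ∈ B j, ω i = t i) ∧ ¬ ∀ i ∈ B m, ω i = t i := by
        constructor
        · exact fun h => ⟨fun j hj => h j (by omega), h m (by omega)⟩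
        · rintro ⟨h, h'⟩ j hj
          rcases Nat.lt_succ_iff_lt_or_eq.1 hj with h1 | rfl
          · exact h j h1
          · exact h'
      have e2 : (∀ i ∈ B m ∪ C, ω i = t i) ↔ (∀ i ∈ B m, ω i = t i) ∧ ∀ i ∈ C, ω i = t i := by
        simp only [Finset.mem_union]
        exact ⟨fun h => ⟨fun i hi => h i (Or.inl hi), fun i hi => h i (Or.inr hi)⟩,
          fun h i hi => hi.elim (h.1 i) (h.2 i)⟩
      simp only [e1, e2]
      exact ite_aux _ _ _ _
    rw [Finset.sum_congr rfl fun ω _ => h3 ω, Finset.sum_sub_distrib, h1, h2]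
    ring

/-- The single-edge weight. -/
noncomputable def ew (p : ℕ → ℝ) (d : ℕ) (b : Bool) : ℝ := if b then p d else 1 - p d

/-- Circular distance of the endpoints of a potential edge. -/
def cd {n : ℕ} (e : EdgeIdx n) : ℕ := min (e.1.2.val - e.1.1.val) (n - (e.1.2.val - e.1.1.val))

theorem cWeight_eq (p : ℕ → ℝ) {n : ℕ} (ω : Sample n) :
    cWeight p ω = ∏ e, ew p (cd e) (ω e) := rfl

theorem ew_nonneg {p : ℕ → ℝ} (hp : ∀ i, 0 ≤ p i ∧ p i ≤ 1) (d : ℕ) (b : Bool) :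
    0 ≤ ew p d b := by
  have := hp d
  unfold ew
  split_ifs <;> linarith

theorem ew_sum (p : ℕ → ℝ) (d : ℕ) : ∑ b, ew p d b = 1 := by
  simp [ew]

/-- The word coding an outcome. -/
noncomputable def codeW {n : ℕ} (N : ℕ) (ω : Sample n) : ℕ → Fin N → Bool := fun v d =>
  open scoped Classical in decide (adjVal ω v ((v + d + 1) % n))

theorem adjVal_symm {n : ℕ} {ω : Sample n} {a b : ℕ} (h : adjVal ω a b) : adjVal ω b a := by
  obtain ⟨e, he, h | h⟩ := h
  · exact ⟨e, he, Or.inr h⟩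
  · exact ⟨e, he, Or.inl h⟩

theorem code_adj {p : ℕ → ℝ} {n N : ℕ} (hN : ∀ i, N < i → p i = 0) (ω : Sample n)
    (hω : cWeight p ω ≠ 0) (v w : Fin n) : sampleAdj ω v w ↔ gAdj (codeW N ω) n v w := by
  rw [cWeight_eq, Finset.prod_ne_zero_iff] at hω
  constructor
  · have key : ∀ e : EdgeIdx n, ω e = true →
        gAdj (codeW N ω) n e.1.1 e.1.2 ∧ gAdj (codeW N ω) n e.1.2 e.1.1 := by
      intro e he
      have h1 := hω e (Finset.mem_univ _)
      simp only [ew, he, if_true] at h1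
      have hcd : cd e ≤ N := by
        by_contra hc
        exact h1 (hN _ (by omega))
      have hlt : e.1.1.val < e.1.2.val := e.2
      have hlt2 := e.1.2.2
      have hA : adjVal ω e.1.1.val e.1.2.val := ⟨e, he, Or.inl ⟨rfl, rfl⟩⟩
      unfold cd at hcd
      rcases Nat.le_total (e.1.2.val - e.1.1.val) (n - (e.1.2.val - e.1.1.val)) with hle | hle
      · rw [min_eq_left hle] at hcd
        have hs : e.1.2.val = (e.1.1.val + (e.1.2.val - e.1.1.val - 1) + 1) % n := by
          rw [Nat.mod_eq_of_lt (by omega)]; omega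
        have : ∃ d : Fin N, e.1.2.val = (e.1.1.val + d + 1) % n ∧
            codeW N ω e.1.1.val d = true := by
          refine ⟨⟨e.1.2.val - e.1.1.val - 1, by omega⟩, hs, ?_⟩
          simp only [codeW, decide_eq_true_eq]
          rw [← hs]; exact hA
        exact ⟨Or.inl this, Or.inr this⟩
      · rw [min_eq_right hle] at hcd
        have hs : e.1.1.val = (e.1.2.val + (n - (e.1.2.val - e.1.1.val) - 1) + 1) % n := by
          rw [Nat.mod_eq_sub_mod (by omega), Nat.mod_eq_of_lt (by omega)]; omega
        have : ∃ d : Fin N, e.1.1.val = (e.1.2.val + d + 1) % n ∧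
            codeW N ω e.1.2.val d = true := by
          refine ⟨⟨n - (e.1.2.val - e.1.1.val) - 1, by omega⟩, hs, ?_⟩
          simp only [codeW, decide_eq_true_eq]
          rw [← hs]; exact adjVal_symm hA
        exact ⟨Or.inr this, Or.inl this⟩
    rintro ⟨e, he, ⟨h1, h2⟩ | ⟨h1, h2⟩⟩
    · rw [← h1, ← h2]; exact (key e he).1
    · rw [← h1, ← h2]; exact (key e he).2
  · rintro (⟨d, hd, hW⟩ | ⟨d, hd, hW⟩)
    · simp only [codeW, decide_eq_true_eq] at hW
      rw [← hd] at hW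
      exact hW
    · simp only [codeW, decide_eq_true_eq] at hW
      rw [← hd] at hW
      exact adjVal_symm hW

theorem code_sat {p : ℕ → ℝ} {n N : ℕ} (hN : ∀ i, N < i → p i = 0) (ω : Sample n)
    (hω : cWeight p ω ≠ 0) (ψ : Lcyc.Sentence) : SatCyc ω ψ ↔ WSat ψ (codeW N ω) n := by
  have h1 : cycStructure ω = relStr (sampleAdj ω) := rfl
  have h2 : sampleAdj ω = fun i j : Fin n => gAdj (codeW N ω) n i j := by
    funext v w
    exact propext (code_adj hN ω hω v w)
  unfold SatCyc WSat
  rw [h1, h2]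

/-- Letters of positive probability. -/
def GoodL (p : ℕ → ℝ) {N : ℕ} (a : Fin N → Bool) : Prop := ∀ d : Fin N, ew p (d + 1) (a d) ≠ 0

theorem adjVal_edge {n : ℕ} (ω : Sample n) (e : EdgeIdx n) :
    adjVal ω e.1.1.val e.1.2.val ↔ ω e = true := by
  constructor
  · rintro ⟨e', he', ⟨h1, h2⟩ | ⟨h1, h2⟩⟩
    · have : e' = e := Subtype.ext (Prod.ext (Fin.ext h1) (Fin.ext h2))
      rwa [← this]
    · have h3 : e'.1.1.val < e'.1.2.val := e'.2
      have h4 : e.1.1.val < e.1.2.val := e.2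
      omega
  · intro h
    exact ⟨e, h, Or.inl ⟨rfl, rfl⟩⟩

theorem code_good {p : ℕ → ℝ} {n N : ℕ} (hn : 2 * N < n) (ω : Sample n)
    (hω : cWeight p ω ≠ 0) (v : ℕ) (hv : v < n) : GoodL p (codeW N ω v) := by
  rw [cWeight_eq, Finset.prod_ne_zero_iff] at hω
  intro d
  have hd := d.2
  obtain ⟨e, hcd, hadj⟩ : ∃ e : EdgeIdx n, cd e = d + 1 ∧
      (adjVal ω v ((v + d + 1) % n) ↔ ω e = true) := by
    rcases Nat.lt_or_ge (v + d + 1) n with hlt | hge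
    · refine ⟨⟨(⟨v, hv⟩, ⟨v + d + 1, hlt⟩), by simp only [Fin.lt_def]; omega⟩, ?_, ?_⟩
      · simp only [cd]; omega
      · rw [Nat.mod_eq_of_lt hlt, ← adjVal_edge]
    · have hm : (v + d + 1) % n = v + d + 1 - n := by
        rw [Nat.mod_eq_sub_mod hge, Nat.mod_eq_of_lt (by omega)]
      refine ⟨⟨(⟨v + d + 1 - n, by omega⟩, ⟨v, hv⟩), by simp only [Fin.lt_def]; omega⟩, ?_, ?_⟩
      · simp only [cd]; omega
      · rw [hm, ← adjVal_edge]
        exact ⟨adjVal_symm, adjVal_symm⟩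
  have : codeW N ω v d = ω e := by
    rw [Bool.eq_iff_iff, ← hadj]
    simp [codeW]
  rw [this, ← hcd]
  exact hω e (Finset.mem_univ _)

/-! ### Blocks -/

open scoped Classical in
/-- The edges with tail in the `j`-th block. -/
noncomputable def blk (n N L j : ℕ) : Finset (EdgeIdx n) :=
  Finset.univ.filter fun e => j * (L + 1) ≤ e.1.1.val ∧ e.1.1.val < j * (L + 1) + L ∧
    e.1.2.val - e.1.1.val ≤ N

/-- The pattern to be found in a block. -/
def pat {N : ℕ} (n : ℕ) (z : List (Fin N → Bool)) : EdgeIdx n → Bool := fun e =>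
  if h : e.1.2.val - e.1.1.val - 1 < N then
    z.getD (e.1.1.val % (z.length + 1)) default ⟨e.1.2.val - e.1.1.val - 1, h⟩ else false

theorem blk_disj (n N L i j : ℕ) (hij : i < j) : Disjoint (blk n N L i) (blk n N L j) := by
  rw [Finset.disjoint_left]
  intro e h1 h2
  simp only [blk, Finset.mem_filter, Finset.mem_univ, true_and] at h1 h2
  have : (i + 1) * (L + 1) ≤ j * (L + 1) := Nat.mul_le_mul_right _ hij
  rw [Nat.add_mul] at this
  omega

theorem pat_edge {N n : ℕ} (z : List (Fin N → Bool)) (j r : ℕ) (hr : r < z.length) (d : Fin N)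
    (e : EdgeIdx n) (h1 : e.1.1.val = j * (z.length + 1) + r)
    (h2 : e.1.2.val = j * (z.length + 1) + r + d + 1) : pat n z e = z[r] d := by
  have h3 : e.1.2.val - e.1.1.val - 1 = d := by omega
  have h4 : e.1.1.val % (z.length + 1) = r := by
    rw [h1, Nat.mul_comm, Nat.mul_add_mod, Nat.mod_eq_of_lt (by omega)]
  have hd := d.2
  unfold pat
  rw [dif_pos (by omega)]
  simp only [h3, h4]
  rw [List.getD_eq_getElem _ _ hr]

/-- Probability of the pattern. -/
noncomputable def patQ (p : ℕ → ℝ) {N : ℕ} (z : List (Fin N → Bool)) : ℝ :=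
  ∏ x : Fin z.length × Fin N, ew p (x.2 + 1) (z[x.1.val] x.2)

theorem blk_prod {p : ℕ → ℝ} {n N : ℕ} (hn : 2 * N < n) (z : List (Fin N → Bool)) (j : ℕ)
    (hj : j * (z.length + 1) + z.length + N ≤ n) :
    ∏ e ∈ blk n N z.length j, ew p (cd e) (pat n z e) = patQ p z := by
  symm
  unfold patQ
  refine Finset.prod_bij (fun x _ => ⟨(⟨j * (z.length + 1) + x.1, by omega⟩,
    ⟨j * (z.length + 1) + x.1 + x.2 + 1, by omega⟩), by simp only [Fin.lt_def]; omega⟩) ?_ ?_ ?_ ?_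
  · intro x _
    simp only [blk, Finset.mem_filter, Finset.mem_univ, true_and]
    omega
  · rintro ⟨r, d⟩ _ ⟨r', d'⟩ _ h
    simp only [Subtype.mk.injEq, Prod.mk.injEq, Fin.mk.injEq] at h
    refine Prod.ext (Fin.ext ?_) (Fin.ext ?_)
    · simp only; omega
    · simp only; omega
  · intro e he
    simp only [blk, Finset.mem_filter, Finset.mem_univ, true_and] at he
    have hlt : e.1.1.val < e.1.2.val := e.2
    refine ⟨(⟨e.1.1.val - j * (z.length + 1), by omega⟩, ⟨e.1.2.val - e.1.1.val - 1, by omega⟩),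
      Finset.mem_univ _, ?_⟩
    refine Subtype.ext (Prod.ext (Fin.ext ?_) (Fin.ext ?_))
    · simp only; omega
    · simp only; omega
  · rintro ⟨r, d⟩ _
    rw [pat_edge z j r r.2 d _ rfl rfl]
    congr 1
    have := d.2
    simp only [cd]
    omega

theorem blk_seg {n N : ℕ} (ω : Sample n) (z : List (Fin N → Bool)) (j : ℕ)
    (hj : j * (z.length + 1) + z.length + N ≤ n)
    (h : ∀ e ∈ blk n N z.length j, ω e = pat n z e) :
    seg (codeW N ω) (j * (z.length + 1)) (j * (z.length + 1) + z.length) = z := by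
  apply List.ext_getElem
  · simp [seg_length]
  · intro r h1 hr
    simp only [seg, List.getElem_map, List.getElem_range', Nat.one_mul]
    funext d
    have hd := d.2
    let e : EdgeIdx n := ⟨(⟨j * (z.length + 1) + r, by omega⟩,
      ⟨j * (z.length + 1) + r + d + 1, by omega⟩), by simp only [Fin.lt_def]; omega⟩
    have he : e ∈ blk n N z.length j := by
      simp only [blk, Finset.mem_filter, Finset.mem_univ, true_and, e]
      omega
    have h2 := h e he
    rw [pat_edge z j r hr d e rfl rfl] at h2
    rw [← h2, Bool.eq_iff_iff, ← adjVal_edge]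
    simp only [codeW, decide_eq_true_eq]
    rw [Nat.mod_eq_of_lt (by omega)]

/-- If `p̄` (with `0 ≤ p i ≤ 1`) has only finitely many non-zero terms,
then for every sentence `ψ` of the language `L≤^c` the probability that `C(n, p̄)` satisfies
`ψ` tends to `0` or to `1`. -/
theorem statement_12 (p : ℕ → ℝ) (hp : ∀ i, 0 ≤ p i ∧ p i ≤ 1)
    (hfin : {i : ℕ | p i ≠ 0}.Finite) (ψ : Lcyc.Sentence) :
    Tendsto (fun n => cProbCyc p n ψ) atTop (nhds 0) ∨
      Tendsto (fun n => cProbCyc p n ψ) atTop (nhds 1) := by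
  classical
  obtain ⟨N, hN⟩ : ∃ N, ∀ i, N < i → p i = 0 := by
    obtain ⟨N, hN⟩ := hfin.bddAbove
    refine ⟨N, fun i hi => ?_⟩
    by_contra hne
    exact absurd (hN hne) (by omega)
  obtain ⟨z, τ, hz, hmagic⟩ := exists_magic ψ (GoodL p (N := N))
  set L := z.length with hL
  set Q := patQ p z with hQ
  have hQ0 : 0 < Q := by
    refine Finset.prod_pos fun x _ => ?_
    exact lt_of_le_of_ne (ew_nonneg hp _ _) (Ne.symm (hz _ (List.getElem_mem _) x.2))
  have hew1 : ∀ d b, ew p d b ≤ 1 := by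
    intro d b
    have := hp d
    unfold ew
    split_ifs <;> linarith
  have hQ1 : Q ≤ 1 := Finset.prod_le_one (fun x _ => ew_nonneg hp _ _) (fun x _ => hew1 _ _)
  let m : ℕ → ℕ := fun n => (n - N) / (L + 1)
  let bad : (n : ℕ) → Sample n → Prop := fun n ω =>
    ∀ j < m n, ¬ ∀ e ∈ blk n N L j, ω e = pat n z e
  have hw0 : ∀ n (ω : Sample n), 0 ≤ cWeight p ω := fun n ω =>
    Finset.prod_nonneg fun e _ => ew_nonneg hp _ _
  have htot : ∀ n, ∑ ω : Sample n, cWeight p ω = 1 := by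
    intro n
    have := cyl_sum (fun e : EdgeIdx n => ew p (cd e)) (fun e => ew_sum p _) (fun _ => true) ∅
    simp only [Finset.notMem_empty, false_imp_iff, implies_true, if_true, Finset.prod_empty] at this
    exact this
  have hmj : ∀ n, 2 * N < n → ∀ j < m n, j * (L + 1) + L + N ≤ n := by
    intro n hn j hj
    have h1 : (j + 1) * (L + 1) ≤ n - N :=
      le_trans (Nat.mul_le_mul_right _ hj) (Nat.div_mul_le_self _ _)
    rw [Nat.add_mul] at h1
    omega
  have hbad : ∀ n, 2 * N < n → (∑ ω : Sample n, if bad n ω then cWeight p ω else 0) =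
      (1 - Q) ^ m n := by
    intro n hn
    have := avoid_sum (fun e : EdgeIdx n => ew p (cd e)) (fun e => ew_sum p _) (pat n z)
      (blk n N L) (m n) ∅ (fun i j hij _ => blk_disj n N L i j hij) (by simp)
    simp only [Finset.notMem_empty, false_imp_iff, implies_true, and_true, Finset.prod_empty,
      mul_one] at this
    rw [Finset.prod_congr rfl (fun j hj => by
      rw [blk_prod hn z j (hmj n hn j (Finset.mem_range.1 hj))])] at this
    rw [Finset.prod_const, Finset.card_range] at this
    rw [← this]
    refine Finset.sum_congr rfl fun ω _ => ?_
    by_cases hb : bad n ω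
    · rw [if_pos hb, if_pos hb, cWeight_eq]
    · rw [if_neg hb, if_neg hb]
  have hgood : ∀ n, 2 * N < n → ∀ ω : Sample n, cWeight p ω ≠ 0 → ¬ bad n ω →
      (SatCyc ω ψ ↔ τ) := by
    intro n hn ω hω hb
    obtain ⟨j, hj, he⟩ : ∃ j, j < m n ∧ ∀ e ∈ blk n N L j, ω e = pat n z e := by
      by_contra hc
      exact hb fun j hj h => hc ⟨j, hj, h⟩
    rw [code_sat hN ω hω]
    refine hmagic _ n (by omega) (fun i hi => code_good hn ω hω i hi)
      ⟨j * (L + 1), ?_, blk_seg ω z j (hmj n hn j hj) ?_⟩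
    · have := hmj n hn j hj
      omega
    · exact he
  have hlim : Tendsto (fun n => (1 - Q) ^ m n) atTop (nhds 0) := by
    refine (tendsto_pow_atTop_nhds_zero_of_lt_one (by linarith) (by linarith)).comp ?_
    exact (Nat.tendsto_div_const_atTop (by omega)).comp (tendsto_sub_atTop_nat N)
  by_cases hτ : τ
  · right
    have hlim' : Tendsto (fun n => 1 - (1 - Q) ^ m n) atTop (nhds 1) := by
      simpa using hlim.const_sub 1
    refine tendsto_of_tendsto_of_tendsto_of_le_of_le' hlim' tendsto_const_nhds ?_ ?_
    · filter_upwards [eventually_gt_atTop (2 * N)] with n hn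
      rw [← hbad n hn, ← htot n, ← Finset.sum_sub_distrib]
      refine Finset.sum_le_sum fun ω _ => ?_
      have := hw0 n ω
      by_cases h0 : cWeight p ω = 0
      · simp [h0]
      by_cases hb : bad n ω
      · rw [if_pos hb]
        split_ifs <;> linarith
      · rw [if_neg hb, if_pos ((hgood n hn ω h0 hb).2 hτ)]
        linarith
    · filter_upwards with n
      rw [← htot n]
      refine Finset.sum_le_sum fun ω _ => ?_
      have := hw0 n ω
      split_ifs <;> linarith
  · left
    refine tendsto_of_tendsto_of_tendsto_of_le_of_le' tendsto_const_nhds hlim ?_ ?_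
    · filter_upwards with n
      refine Finset.sum_nonneg fun ω _ => ?_
      have := hw0 n ω
      split_ifs <;> linarith
    · filter_upwards [eventually_gt_atTop (2 * N)] with n hn
      rw [← hbad n hn]
      refine Finset.sum_le_sum fun ω _ => ?_
      have := hw0 n ω
      by_cases h0 : cWeight p ω = 0
      · simp [h0]
      by_cases hb : bad n ω
      · rw [if_pos hb]
        split_ifs <;> linarith
      · rw [if_neg hb, if_neg (fun h => hτ ((hgood n hn ω h0 hb).1 h))]

end RandomGraph
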